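/- For every real numbers a and b, |f̂_m(a,b)·(b−a) − (F_m(b) − F_m(a))| ≤ |a|·|b−a|³ + (1/4)(b−a)⁴, where f̂_m(a,b) = f_m(a) + (1/2) f_m'(a)(b−a). -/

import Mathlib

/-- The double-well mixing potential `F_m(x) = (1/4)(x² − 1)²`. -/
noncomputable def Fm (x : ℝ) : ℝ := (1/4) * (x^2 - 1)^2

/-- Its derivative `f_m(x) = x³ − x`. -/
noncomputable def fm (x : ℝ) : ℝ := x^3 - x

/-- The linearized discrete mixing force of the OD2-W scheme,
`f̂_m(a,b) = f_m(a) + (1/2) f_m'(a) (b − a)`. -/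
noncomputable def fhatm (a b : ℝ) : ℝ := fm a + (1/2) * (3*a^2 - 1) * (b - a)

/-- Third-order bound on the pointwise phobic numerical dissipation. -/
theorem phobic_dissipation_bound (a b : ℝ) :
    |fhatm a b * (b - a) - (Fm b - Fm a)| ≤ |a| * |b - a|^3 + (1/4) * (b - a)^4 := by
  -- Minus the cubic and quartic Taylor terms of `Fm` at `a`: the expansion is exact in degree four.
  have h : fhatm a b * (b - a) - (Fm b - Fm a) = -(a * (b - a)^3 + (1/4) * (b - a)^4) := by
    unfold fhatm Fm fm
    ring
  have h4 : 0 ≤ (1/4) * (b - a)^4 := by positivity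
  rw [h, abs_neg]
  refine (abs_add_le _ _).trans_eq ?_
  rw [abs_mul, abs_pow, abs_of_nonneg h4]
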